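/- Let k ≥ 1 be an integer, let h ∈ SL₂(ℤ_p) with h − 1 ∈ p^{k+1}·M₂(ℤ_p), let v = (p^{−k}a, p^{−k}b) ∈ V with a, b ∈ O_E, let w = c + p^{−1}d·δ with c, d ∈ O_E, and set ν = N_{D/F}(w) = c·c̄ − p^{−1}·d·d̄. Then χ(Tr_{E/F}(⟨v, c(h)v⟩ · ν)) = ψ(tr(b₁·(h − 1))), where c(h) = (1 − h)(1 + h)^{−1} and b₁ is the traceless matrix b₁ = −(p^{−k+2}/2)·ν·[[−p^{−k−1}(āb + ab̄), 2p^{−k−1}a·ā],[−2p^{−k−1}b·b̄, p^{−k−1}(ab̄ + āb)]] ∈ M₂(F). -/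

import Mathlib

noncomputable section
open Matrix

/-- The image of `p` in `E`. -/
def pE (p : ℕ) [Fact p.Prime] (E : Type) [Field E] [Algebra ℚ_[p] E] : E :=
  algebraMap ℚ_[p] E (p : ℚ_[p])

/-- The ring of integers `O_E = ℤ_p + ℤ_p·α` of the unramified quadratic extension
`E = F(α)`, as a set. -/
def OE (p : ℕ) [Fact p.Prime] (E : Type) [Field E] [Algebra ℚ_[p] E] (α : E) : Set E :=
  {x | ∃ a b : ℤ_[p],
    x = algebraMap ℚ_[p] E (a : ℚ_[p]) + algebraMap ℚ_[p] E (b : ℚ_[p]) * α}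

/-- The element `x_{a,b} = !![a, b; p·conj b, conj a]` of the quaternion division algebra
`D ⊆ M₂(E)`. -/
def qmat (p : ℕ) [Fact p.Prime] (E : Type) [Field E] [Algebra ℚ_[p] E]
    (conj : E → E) (a b : E) : Matrix (Fin 2) (Fin 2) E :=
  !![a, b; pE p E * conj b, conj a]

/-- The uniformizer `δ = x_{0,1}` of `D`, with `δ² = p`. -/
def deltaM (p : ℕ) [Fact p.Prime] (E : Type) [Field E] [Algebra ℚ_[p] E] :
    Matrix (Fin 2) (Fin 2) E :=
  !![0, 1; pE p E, 0]

/-- The maximal order `O_D = {x_{a,b} : a, b ∈ O_E}` of `D`, as a set. -/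
def ODset (p : ℕ) [Fact p.Prime] (E : Type) [Field E] [Algebra ℚ_[p] E]
    (α : E) (conj : E → E) : Set (Matrix (Fin 2) (Fin 2) E) :=
  {m | ∃ a b : E, a ∈ OE p E α ∧ b ∈ OE p E α ∧ m = qmat p E conj a b}

/-- The norm-one group `D¹ = {x ∈ D : det x = 1}`, as a set. -/
def D1set (p : ℕ) [Fact p.Prime] (E : Type) [Field E] [Algebra ℚ_[p] E]
    (conj : E → E) : Set (Matrix (Fin 2) (Fin 2) E) :=
  {m | (∃ a b : E, m = qmat p E conj a b) ∧ m.det = 1}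

/-- `vDge p E α conj r m` says `v_D(m) ≥ r`, i.e. `m ∈ δ^r·O_D = P_D^r`. -/
def vDge (p : ℕ) [Fact p.Prime] (E : Type) [Field E] [Algebra ℚ_[p] E]
    (α : E) (conj : E → E) (r : ℕ) (m : Matrix (Fin 2) (Fin 2) E) : Prop :=
  ∃ yy ∈ ODset p E α conj, m = deltaM p E ^ r * yy

/-- `x ∈ P_E = p·O_E`. -/
def inPE (p : ℕ) [Fact p.Prime] (E : Type) [Field E] [Algebra ℚ_[p] E]
    (α : E) (x : E) : Prop :=
  ∃ c ∈ OE p E α, x = pE p E * c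

/-- The pure tensor `v ⊗ w ∈ 𝒲 = V ⊗_E W` in coordinates: `(v ⊗ w) i j = v i · conj (w j)`
(the `E`-structure on `W`-coordinates is twisted by conjugation, so that the symplectic
form below is well defined on `𝒲`).  Here `w = (c, d)` stands for `c + d·δ ∈ W = D`. -/
def tens (E : Type) [Field E] (conj : E → E) (v w : Fin 2 → E) :
    Matrix (Fin 2) (Fin 2) E :=
  Matrix.of fun i j => v i * conj (w j)

/-- The symplectic form `⟨⟨x, y⟩⟩ = Tr_{E/F}(⟨v,v'⟩·conj(⟨w,w'⟩'))` of `𝒲`, written in the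
coordinates above, with values `t + conj t` landing in (the image of) `F`. -/
def sympE (p : ℕ) [Fact p.Prime] (E : Type) [Field E] [Algebra ℚ_[p] E]
    (conj : E → E) (x y : Matrix (Fin 2) (Fin 2) E) : E :=
  (x 0 0 * conj (y 1 0) - pE p E * (x 0 1 * conj (y 1 1))
      - x 1 0 * conj (y 0 0) + pE p E * (x 1 1 * conj (y 0 1)))
    + conj (x 0 0 * conj (y 1 0) - pE p E * (x 0 1 * conj (y 1 1))
      - x 1 0 * conj (y 0 0) + pE p E * (x 1 1 * conj (y 0 1)))

/-- The lattice `A = Γ ⊗ Γ'`: the `O_E`-span (= additive span) of the pure tensors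
`v ⊗ w` with `v ∈ Γ = O_E²` and `w ∈ Γ' = O_E + O_E·δ`. -/
def Alat (p : ℕ) [Fact p.Prime] (E : Type) [Field E] [Algebra ℚ_[p] E]
    (α : E) (conj : E → E) : AddSubgroup (Matrix (Fin 2) (Fin 2) E) :=
  AddSubgroup.closure
    {m | ∃ v w : Fin 2 → E, (∀ i, v i ∈ OE p E α) ∧ (∀ j, w j ∈ OE p E α) ∧
      m = tens E conj v w}

/-- `x` lies in (the image in `E` of) `ℤ_p`. -/
def integralF (p : ℕ) [Fact p.Prime] (E : Type) [Field E] [Algebra ℚ_[p] E]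
    (x : E) : Prop :=
  ∃ s : ℤ_[p], x = algebraMap ℚ_[p] E ((s : ℚ_[p]))

/-- The dual lattice `L* = {z ∈ 𝒲 : ⟨⟨z, l⟩⟩ ∈ ℤ_p for all l ∈ L}`. -/
def dualLat (p : ℕ) [Fact p.Prime] (E : Type) [Field E] [Algebra ℚ_[p] E]
    (α : E) (conj : E → E) (L : Set (Matrix (Fin 2) (Fin 2) E)) :
    Set (Matrix (Fin 2) (Fin 2) E) :=
  {zz | ∀ l ∈ L, integralF p E (sympE p E conj zz l)}

/-- The entrywise embedding `M₂(ℤ_p) → M₂(E)`. -/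
def toE (p : ℕ) [Fact p.Prime] (E : Type) [Field E] [Algebra ℚ_[p] E]
    (m : Matrix (Fin 2) (Fin 2) ℤ_[p]) : Matrix (Fin 2) (Fin 2) E :=
  m.map fun t => algebraMap ℚ_[p] E (t : ℚ_[p])

/-- The Cayley transform `c(m) = (1 - m)(1 + m)⁻¹`. -/
def cay {E : Type} [Field E] (m : Matrix (Fin 2) (Fin 2) E) : Matrix (Fin 2) (Fin 2) E :=
  (1 - m) * (1 + m)⁻¹

/-- The skew-Hermitian form `⟨x, y⟩ = x₁·conj y₂ - x₂·conj y₁` on `V = E²`. -/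
def sesqV (E : Type) [Field E] (conj : E → E) (x y : Fin 2 → E) : E :=
  x 0 * conj (y 1) - x 1 * conj (y 0)

/-- `Tr_{E/F}(x) = x + conj x`, as an element of `E`. -/
def trEl (E : Type) [Field E] (conj : E → E) (x : E) : E := x + conj x

/-- An integral element has integral norm. -/
theorem exists_mul_conj_eq {p : ℕ} [Fact p.Prime] {z : ℤ_[p]} {E : Type} [Field E]
    [Algebra ℚ_[p] E] {α : E} (hα : α * α = algebraMap ℚ_[p] E (z : ℚ_[p]))
    {conj : E →ₐ[ℚ_[p]] E} (hconj : conj α = -α) {a : E} (ha : a ∈ OE p E α) :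
    ∃ n : ℤ_[p], a * conj a = algebraMap ℚ_[p] E (n : ℚ_[p]) := by
  obtain ⟨x, y, rfl⟩ := ha
  refine ⟨x * x - y * y * z, ?_⟩
  push_cast
  simp only [map_add, map_mul, AlgHom.commutes, hconj, ← hα]
  ring

/-- For integral `a`, `b`, the trace of `a * conj b` is integral. -/
theorem exists_mul_conj_add_eq {p : ℕ} [Fact p.Prime] {z : ℤ_[p]} {E : Type} [Field E]
    [Algebra ℚ_[p] E] {α : E} (hα : α * α = algebraMap ℚ_[p] E (z : ℚ_[p]))
    {conj : E →ₐ[ℚ_[p]] E} (hconj : conj α = -α) {a b : E} (ha : a ∈ OE p E α)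
    (hb : b ∈ OE p E α) :
    ∃ s : ℤ_[p], a * conj b + conj a * b = algebraMap ℚ_[p] E (s : ℚ_[p]) := by
  obtain ⟨x, y, rfl⟩ := ha
  obtain ⟨x', y', rfl⟩ := hb
  refine ⟨x * x' - y * y' * z + (x * x' - y * y' * z), ?_⟩
  push_cast
  simp only [map_add, map_mul, AlgHom.commutes, hconj, ← hα]
  ring

/-- The Cayley transform of a `2 × 2` matrix of determinant one. -/
theorem cay_eq_smul {E : Type} [Field E] {A B C D : E} (hdet : A * D - B * C = 1)
    (ht : 2 + A + D ≠ 0) :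
    cay !![A, B; C, D] = (2 + A + D)⁻¹ • !![D - A, -(2 * B); -(2 * C), A - D] := by
  have hd : (1 + !![A, B; C, D] : Matrix (Fin 2) (Fin 2) E).det = 2 + A + D := by
    simp [Matrix.det_fin_two]
    linear_combination hdet
  have hu : IsUnit (1 + !![A, B; C, D] : Matrix (Fin 2) (Fin 2) E).det := by
    rw [hd]; exact ht.isUnit
  rw [cay, Matrix.inv_def, hd, Ring.inverse_eq_inv', Matrix.mul_smul]
  congr 1
  ext i j
  fin_cases i <;> fin_cases j <;> simp [Matrix.adjugate_fin_two, Matrix.mul_apply]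
  · linear_combination -hdet
  · ring
  · ring
  · linear_combination -hdet

/-- In odd residue characteristic `2` is a unit of `ℤ_p`. -/
theorem isUnit_two_padicInt {p : ℕ} [Fact p.Prime] (hp : p ≠ 2) : IsUnit (2 : ℤ_[p]) := by
  have h2 : ((2 : ℕ) : ℤ_[p]) = 2 := by norm_num
  rw [← h2, PadicInt.isUnit_iff]
  rw [PadicInt.norm_natCast_eq_one_iff]
  exact (Nat.coprime_primes Fact.out Nat.prime_two).2 hp

/-- A `p`-adic integer congruent to `4` modulo `p` is a unit when `p` is odd. -/
theorem isUnit_four_sub_mul {p : ℕ} [Fact p.Prime] (hp : p ≠ 2) (x : ℤ_[p]) :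
    IsUnit (4 - (p : ℤ_[p]) * x) := by
  by_contra hn
  have h1 : 4 - (p : ℤ_[p]) * x ∈ IsLocalRing.maximalIdeal ℤ_[p] := hn
  have h2 : (p : ℤ_[p]) * x ∈ IsLocalRing.maximalIdeal ℤ_[p] :=
    Ideal.mul_mem_right _ _ PadicInt.prime_p.not_isUnit
  have h3 := add_mem h1 h2
  rw [sub_add_cancel] at h3
  refine h3 ?_
  have := (isUnit_two_padicInt hp).mul (isUnit_two_padicInt hp)
  norm_num at this
  exact this

/-- for `k ≥ 1`, `h ∈ SL₂(ℤ_p)` with `h - 1 ∈ p^{k+1}·M₂(ℤ_p)`,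
`v = (p^{-k}a, p^{-k}b)` with `a, b ∈ O_E`, `w = c + p⁻¹·d·δ` with `c, d ∈ O_E`, and
`ν = N_{D/F}(w) = c·c̄ - p⁻¹·d·d̄`, one has
`χ(Tr_{E/F}(⟨v, c(h)v⟩·ν)) = ψ(tr(b₁·(h - 1)))` where `χ(t) = ψ(p·t)` and `b₁` is the
traceless matrix
`b₁ = -(p^{-k+2}/2)·ν·!![-p^{-k-1}(āb + ab̄), 2p^{-k-1}aā; -2p^{-k-1}bb̄, p^{-k-1}(ab̄ + āb)]`. -/
theorem stmt16 (p : ℕ) [Fact p.Prime] (hp : p ≠ 2)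
    (z : ℤ_[p]ˣ) (hz : ¬ ∃ w : ℤ_[p], w * w = (z : ℤ_[p]))
    (E : Type) [Field E] [Algebra ℚ_[p] E] (α : E)
    (hα : α * α = algebraMap ℚ_[p] E ((z : ℤ_[p]) : ℚ_[p]))
    (hα0 : α ∉ Set.range (algebraMap ℚ_[p] E))
    (hspan : ∀ x : E, ∃ a b : ℚ_[p], x = algebraMap ℚ_[p] E a + algebraMap ℚ_[p] E b * α)
    (conj : E →ₐ[ℚ_[p]] E) (hconj : conj α = -α)
    (TrF : E → ℚ_[p]) (hTrF : ∀ t : ℚ_[p], TrF (algebraMap ℚ_[p] E t) = t)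
    (ψ : AddChar ℚ_[p] ℂˣ)
    (hψ1 : ∀ t : ℤ_[p], ψ ((p : ℚ_[p]) * (t : ℚ_[p])) = 1)
    (hψ2 : ∃ t : ℤ_[p], ψ ((t : ℚ_[p])) ≠ 1)
    (k : ℕ) (hk : 1 ≤ k) (h : Matrix.SpecialLinearGroup (Fin 2) ℤ_[p])
    (hh : ∀ i j : Fin 2,
      ((p : ℤ_[p]) ^ (k + 1)) ∣ ((h : Matrix (Fin 2) (Fin 2) ℤ_[p]) - 1) i j)
    (a b : E) (ha : a ∈ OE p E α) (hb : b ∈ OE p E α)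
    (c d : E) (hc : c ∈ OE p E α) (hd : d ∈ OE p E α)
    (ν : E) (hν : ν = c * conj c - (pE p E)⁻¹ * (d * conj d))
    (v : Fin 2 → E) (hv : v = ![(pE p E)⁻¹ ^ k * a, (pE p E)⁻¹ ^ k * b])
    (b₁ : Matrix (Fin 2) (Fin 2) E)
    (hb₁ : b₁ = (-(pE p E ^ 2 * ((pE p E)⁻¹) ^ k * (2 : E)⁻¹ * ν)) •
      !![-(((pE p E)⁻¹) ^ (k + 1)) * (conj a * b + a * conj b),
           2 * ((pE p E)⁻¹) ^ (k + 1) * (a * conj a);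
         -(2 * ((pE p E)⁻¹) ^ (k + 1) * (b * conj b)),
           ((pE p E)⁻¹) ^ (k + 1) * (a * conj b + conj a * b)]) :
    Matrix.trace b₁ = 0 ∧
    ψ ((p : ℚ_[p]) * TrF (trEl E conj
        (sesqV E conj v ((cay (toE p E (h : Matrix (Fin 2) (Fin 2) ℤ_[p]))).mulVec v) * ν)))
      = ψ (TrF (Matrix.trace (b₁ * (toE p E (h : Matrix (Fin 2) (Fin 2) ℤ_[p]) - 1)))) := by
  have hp0 : (p : ℚ_[p]) ≠ 0 := by exact_mod_cast (Fact.out : p.Prime).ne_zero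
  have hp0Z : (p : ℤ_[p]) ≠ 0 := by exact_mod_cast (Fact.out : p.Prime).ne_zero
  have htwo : algebraMap ℚ_[p] E 2 = 2 := map_ofNat _ 2
  have hconj_two : conj 2 = 2 := map_ofNat _ 2
  have hcast_two : ((2 : ℤ_[p]) : ℚ_[p]) = 2 := rfl
  refine ⟨?_, ?_⟩
  · rw [hb₁, Matrix.trace_smul, Matrix.trace_fin_two]
    simp
    right
    ring
  obtain ⟨na, hna⟩ := exists_mul_conj_eq hα hconj ha
  obtain ⟨nb, hnb⟩ := exists_mul_conj_eq hα hconj hb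
  obtain ⟨nc, hnc⟩ := exists_mul_conj_eq hα hconj hc
  obtain ⟨nd, hnd⟩ := exists_mul_conj_eq hα hconj hd
  obtain ⟨s, hs⟩ := exists_mul_conj_add_eq hα hconj ha hb
  obtain ⟨X, hX⟩ := hh 0 0
  obtain ⟨Y, hY⟩ := hh 0 1
  obtain ⟨Z, hZ⟩ := hh 1 0
  obtain ⟨W, hW⟩ := hh 1 1
  have hdet := h.det_coe
  generalize (h : Matrix (Fin 2) (Fin 2) ℤ_[p]) = H at *
  rw [Matrix.det_fin_two] at hdet
  simp only [Matrix.sub_apply, Matrix.one_apply, Fin.isValue, if_true, zero_ne_one,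
    one_ne_zero, if_false, sub_zero] at hX hY hZ hW
  rw [sub_eq_iff_eq_add] at hX hW
  have hq0 : (p : ℤ_[p]) ^ (k + 1) ≠ 0 := pow_ne_zero _ hp0Z
  have htr : X + W + (p : ℤ_[p]) ^ (k + 1) * (X * W - Y * Z) = 0 := by
    refine (mul_eq_zero.1 ?_).resolve_left hq0
    rw [hX, hY, hZ, hW] at hdet
    linear_combination hdet
  obtain ⟨m, hm⟩ : ∃ m, m = X * W - Y * Z := ⟨_, rfl⟩
  rw [← hm] at htr
  have hunit : IsUnit (2 + H 0 0 + H 1 1) := by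
    have := isUnit_four_sub_mul hp ((p : ℤ_[p]) ^ k * (p : ℤ_[p]) ^ (k + 1) * m)
    convert this using 1
    rw [hX, hW]
    linear_combination (p : ℤ_[p]) ^ (k + 1) * htr
  obtain ⟨u, hu⟩ := hunit.exists_right_inv
  obtain ⟨e, he⟩ := (isUnit_two_padicInt hp).exists_right_inv
  have huQ : (2 + (H 0 0 : ℚ_[p]) + H 1 1) * u = 1 := by exact_mod_cast congrArg ((↑) : ℤ_[p] → ℚ_[p]) hu
  have hdetQ : (H 0 0 : ℚ_[p]) * H 1 1 - H 0 1 * H 1 0 = 1 := by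
    exact_mod_cast congrArg ((↑) : ℤ_[p] → ℚ_[p]) hdet
  have huE : (2 + algebraMap ℚ_[p] E (H 0 0) + algebraMap ℚ_[p] E (H 1 1)) *
      algebraMap ℚ_[p] E u = 1 := by
    simpa [htwo] using congrArg (algebraMap ℚ_[p] E) huQ
  have hdetE : algebraMap ℚ_[p] E (H 0 0) * algebraMap ℚ_[p] E (H 1 1) -
      algebraMap ℚ_[p] E (H 0 1) * algebraMap ℚ_[p] E (H 1 0) = 1 := by
    simpa using congrArg (algebraMap ℚ_[p] E) hdetQ
  have hHE : toE p E H = !![algebraMap ℚ_[p] E (H 0 0), algebraMap ℚ_[p] E (H 0 1);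
      algebraMap ℚ_[p] E (H 1 0), algebraMap ℚ_[p] E (H 1 1)] := by
    ext i j
    fin_cases i <;> fin_cases j <;> rfl
  have hνF : ν = algebraMap ℚ_[p] E ((nc : ℚ_[p]) - (p : ℚ_[p])⁻¹ * nd) := by
    rw [hν, hnc, hnd, pE]; simp
  obtain ⟨n, hn⟩ : ∃ n : ℚ_[p], n = (nc : ℚ_[p]) - (p : ℚ_[p])⁻¹ * nd := ⟨_, rfl⟩
  obtain ⟨Q, hQ⟩ : ∃ Q : ℚ_[p], Q = s * ((H 0 0 : ℚ_[p]) - H 1 1) - 2 * na * H 1 0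
    + 2 * nb * H 0 1 := ⟨_, rfl⟩
  have hQE : algebraMap ℚ_[p] E Q = (a * conj b + conj a * b) *
      (algebraMap ℚ_[p] E (H 0 0) - algebraMap ℚ_[p] E (H 1 1)) -
      2 * (a * conj a) * algebraMap ℚ_[p] E (H 1 0) +
      2 * (b * conj b) * algebraMap ℚ_[p] E (H 0 1) := by
    rw [hs, hna, hnb, hQ]; simp [htwo]
  rw [← hn] at hνF
  have hinv : (2 + algebraMap ℚ_[p] E (H 0 0) + algebraMap ℚ_[p] E (H 1 1))⁻¹ =
      algebraMap ℚ_[p] E u := inv_eq_of_mul_eq_one_right huE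
  have hform : sesqV E conj v ((cay (toE p E H)).mulVec v) =
      algebraMap ℚ_[p] E ((p : ℚ_[p])⁻¹ ^ (2 * k) * u * Q) := by
    rw [hHE, cay_eq_smul hdetE (left_ne_zero_of_mul_eq_one huE), hinv, hv, sesqV]
    simp only [map_mul, map_pow, map_inv₀, hQE, pE]
    simp [Matrix.mulVec, dotProduct, Fin.sum_univ_two, hconj_two]
    ring
  have hL : trEl E conj (sesqV E conj v ((cay (toE p E H)).mulVec v) * ν) =
      algebraMap ℚ_[p] E (2 * ((p : ℚ_[p])⁻¹ ^ (2 * k) * u * Q * n)) := by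
    rw [hform, hνF, trEl, ← map_mul, AlgHom.commutes, ← map_add]
    congr 1
    ring
  have hR : Matrix.trace (b₁ * (toE p E H - 1)) =
      algebraMap ℚ_[p] E ((p : ℚ_[p]) ^ 2 * (p : ℚ_[p])⁻¹ ^ (2 * k + 1) * 2⁻¹ * n * Q) := by
    have hsub : toE p E H - 1 = !![algebraMap ℚ_[p] E (H 0 0) - 1, algebraMap ℚ_[p] E (H 0 1);
        algebraMap ℚ_[p] E (H 1 0), algebraMap ℚ_[p] E (H 1 1) - 1] := by
      rw [hHE]
      ext i j
      fin_cases i <;> fin_cases j <;> simp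
    rw [hsub, hb₁, hνF]
    simp only [map_mul, map_pow, map_inv₀, hQE, pE, htwo]
    simp [Matrix.trace_fin_two]
    ring
  rw [hL, hR, hTrF, hTrF]
  rw [← div_eq_one, ← AddChar.map_sub_eq_div]
  have hint : ((p : ℚ_[p]) * (2 * ((p : ℚ_[p])⁻¹ ^ (2 * k) * u * Q * n)) -
      (p : ℚ_[p]) ^ 2 * (p : ℚ_[p])⁻¹ ^ (2 * k + 1) * 2⁻¹ * n * Q) =
      (p : ℚ_[p]) * (((p : ℤ_[p]) ^ (k + 2) * (p * nc - nd) *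
        (s * (X - W) - 2 * na * Z + 2 * nb * Y) * m * e * u : ℤ_[p]) : ℚ_[p]) := by
    have he' : (2 : ℚ_[p])⁻¹ = e := by
      refine inv_eq_of_mul_eq_one_right ?_
      exact_mod_cast congrArg ((↑) : ℤ_[p] → ℚ_[p]) he
    have hue : 2 * u - e = ((p : ℤ_[p]) ^ (k + 1)) ^ 2 * (m * e * u) := by
      rw [hX, hW] at hu
      linear_combination e * hu - 2 * u * he - (p : ℤ_[p]) ^ (k + 1) * e * u * htr
    have hueQ : 2 * (u : ℚ_[p]) - e = ((p : ℚ_[p]) ^ (k + 1)) ^ 2 * (m * e * u) := by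
      exact_mod_cast congrArg ((↑) : ℤ_[p] → ℚ_[p]) hue
    have hQ' : Q = (p : ℚ_[p]) ^ (k + 1) * (s * ((X : ℚ_[p]) - W) - 2 * na * Z + 2 * nb * Y) := by
      rw [hQ, hX, hY, hZ, hW]
      push_cast
      ring
    have hn' : n = (p : ℚ_[p])⁻¹ * ((p : ℚ_[p]) * nc - nd) := by
      rw [hn]; field_simp
    obtain ⟨R, hRdef⟩ : ∃ R : ℚ_[p],
      R = s * ((X : ℚ_[p]) - W) - 2 * na * Z + 2 * nb * Y := ⟨_, rfl⟩
    obtain ⟨P, hP⟩ : ∃ P : ℚ_[p], P = (p : ℚ_[p]) * nc - nd := ⟨_, rfl⟩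
    push_cast
    rw [hcast_two, hQ', hn', he', ← hRdef, ← hP]
    calc _ = (p : ℚ_[p]) * (p : ℚ_[p])⁻¹ ^ (2 * k) * (p : ℚ_[p]) ^ (k + 1) * R *
          ((p : ℚ_[p])⁻¹ * P) * (2 * (u : ℚ_[p]) - e) := by
          simp only [inv_pow]
          field_simp
          ring
      _ = _ := by
          rw [hueQ]
          simp only [inv_pow]
          field_simp
          ring
  rw [hint]
  exact hψ1 _
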